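/- arXiv:2212.07041 — 4 statements merged into one kernel-verified Lean document; each statement's English description precedes it below -/
import Mathlib

section
/- Let F and E be finite-dimensional real vector spaces with a nondegenerate bilinear pairing ⟨·|·⟩ : E × F → ℝ, and let D ⊆ F × E be a linear subspace. If ⟨e|f⟩ = 0 for every (f, e) ∈ D and dim D = dim F, then D is a Dirac structure, i.e., D equals its orthogonal complement with respect to the symmetrized pairing. -/
/-!
For a subspace `D`, the orthogonal complement with respect to a reflexive form `B` on `V` has
dimension `dim V - dim D + dim (D ∩ ker B)`. The kernel of the symmetrized pairing is
`ker pair.flip × ker pair`, which has dimension `dim F - dim E` when `pair : E → F*` is injective.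
Hence `dim D ≥ dim F` forces `dim Dᗮ ≤ dim F ≤ dim D`. Polarizing `⟨e|f⟩ = 0` gives `D ≤ Dᗮ`,
so the two subspaces agree.
-/

open Module

section Semiring

variable {R F E : Type*} [CommSemiring R] [AddCommMonoid F] [Module R F] [AddCommMonoid E]
  [Module R E]

/-- The symmetrized pairing `⟨⟨(f₁, e₁), (f₂, e₂)⟩⟩ = ⟨e₂|f₁⟩ + ⟨e₁|f₂⟩`, as a bilinear form on
`F × E`. -/
def symmPairing (pair : E →ₗ[R] F →ₗ[R] R) : LinearMap.BilinForm R (F × E) :=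
  pair.flip.compl₁₂ (LinearMap.fst R F E) (LinearMap.snd R F E) +
    pair.compl₁₂ (LinearMap.snd R F E) (LinearMap.fst R F E)

/-- A Dirac structure: a submodule of `F × E` equal to its own orthogonal complement with respect
to the symmetrized pairing. -/
def IsDirac (pair : E →ₗ[R] F →ₗ[R] R) (D : Submodule R (F × E)) : Prop :=
  D = (symmPairing pair).orthogonal D

variable (pair : E →ₗ[R] F →ₗ[R] R)

theorem symmPairing_apply (x y : F × E) :
    symmPairing pair x y = pair y.2 x.1 + pair x.2 y.1 := rfl

theorem ker_symmPairing : (symmPairing pair).ker = pair.flip.ker.prod pair.ker := by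
  ext ⟨f, e⟩
  simp only [Submodule.mem_prod, LinearMap.mem_ker, LinearMap.ext_iff, symmPairing_apply,
    LinearMap.flip_apply, LinearMap.zero_apply]
  refine ⟨fun h => ⟨fun e' => ?_, fun f' => ?_⟩, fun h y => by rw [h.1, h.2, add_zero]⟩
  · simpa using h (0, e')
  · simpa using h (f', 0)

variable {pair} {D : Submodule R (F × E)}

theorem isDirac_iff_coe_eq :
    IsDirac pair D ↔
      (D : Set (F × E)) = {x : F × E | ∀ y ∈ D, pair y.2 x.1 + pair x.2 y.1 = 0} := by
  have orthogonal_eq : ((symmPairing pair).orthogonal D : Set (F × E)) =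
      {x : F × E | ∀ y ∈ D, pair y.2 x.1 + pair x.2 y.1 = 0} :=
    Set.ext fun x => forall₂_congr fun y _ => by rw [symmPairing_apply, add_comm]
  rw [IsDirac, ← SetLike.coe_set_eq, orthogonal_eq]

theorem le_orthogonal_symmPairing (hpow : ∀ x ∈ D, pair x.2 x.1 = 0) :
    D ≤ (symmPairing pair).orthogonal D := by
  intro x hx y hy
  have hxy : pair (y + x).2 (y + x).1 = 0 := hpow _ (D.add_mem hy hx)
  simpa [symmPairing_apply, hpow x hx, hpow y hy, add_comm] using hxy

end Semiring

section Field

variable {K F E : Type*} [Field K] [AddCommGroup F] [Module K F] [AddCommGroup E] [Module K E]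
  [FiniteDimensional K F] {pair : E →ₗ[K] F →ₗ[K] K}

theorem finrank_ker_flip_add_finrank (hpair : Function.Injective pair) :
    finrank K pair.flip.ker + finrank K E = finrank K F := by
  have flip_surjective : Function.Surjective pair.flip := LinearMap.flip_surjective_iff₂.2 hpair
  calc finrank K pair.flip.ker + finrank K E
      = finrank K pair.flip.ker + finrank K pair.flip.range := by
        rw [LinearMap.range_eq_top.2 flip_surjective, finrank_top, Subspace.dual_finrank_eq]
    _ = finrank K F := by rw [add_comm, LinearMap.finrank_range_add_finrank_ker]

theorem finrank_ker_symmPairing_add_finrank (hpair : Function.Injective pair) :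
    finrank K (symmPairing pair).ker + finrank K E = finrank K F := by
  rw [ker_symmPairing, LinearMap.ker_eq_bot.2 hpair, ← Submodule.map_inl,
    ← (Submodule.equivMapOfInjective _ LinearMap.inl_injective _).finrank_eq,
    finrank_ker_flip_add_finrank hpair]

theorem finrank_add_finrank_orthogonal_symmPairing_le (hpair : Function.Injective pair)
    (D : Submodule K (F × E)) :
    finrank K D + finrank K ((symmPairing pair).orthogonal D) ≤ 2 * finrank K F := by
  have : FiniteDimensional K E := .of_injective pair hpair
  calc finrank K D + finrank K ((symmPairing pair).orthogonal D)
      = finrank K (F × E) + finrank K (D ⊓ (symmPairing pair).ker : Submodule K (F × E)) :=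
        LinearMap.BilinForm.finrank_add_finrank_orthogonal' D
    _ ≤ finrank K (F × E) + finrank K (symmPairing pair).ker := by
        gcongr
        exact Submodule.finrank_mono inf_le_right
    _ = 2 * finrank K F := by
        rw [finrank_prod, add_assoc, add_comm (finrank K E),
          finrank_ker_symmPairing_add_finrank hpair, two_mul]

theorem IsDirac.of_le_orthogonal {D : Submodule K (F × E)} (hpair : Function.Injective pair)
    (hD : D ≤ (symmPairing pair).orthogonal D) (hdim : finrank K F ≤ finrank K D) :
    IsDirac pair D := by
  have : FiniteDimensional K E := .of_injective pair hpair
  refine Submodule.eq_of_le_of_finrank_le hD ?_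
  linarith [finrank_add_finrank_orthogonal_symmPairing_le hpair D]

end Field

theorem dirac_of_power_conserving_and_dim_general
    {K F E : Type*} [Field K] [AddCommGroup F] [Module K F] [AddCommGroup E] [Module K E]
    [FiniteDimensional K F]
    (pair : E →ₗ[K] F →ₗ[K] K)
    (hnd : ∀ e : E, (∀ f : F, pair e f = 0) → e = 0)
    (D : Submodule K (F × E))
    (hpow : ∀ x ∈ D, pair x.2 x.1 = 0)
    (hdim : finrank K F ≤ finrank K D) :
    (D : Set (F × E)) =
      {x : F × E | ∀ y ∈ D, pair y.2 x.1 + pair x.2 y.1 = 0} := by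
  have pair_injective : Function.Injective pair :=
    LinearMap.ker_eq_bot.1 (LinearMap.separatingLeft_iff_ker_eq_bot.1 hnd)
  exact isDirac_iff_coe_eq.1
    (.of_le_orthogonal pair_injective (le_orthogonal_symmPairing hpow) hdim)

/-- If a linear subspace `D ⊆ F × E` is power conserving (`⟨e|f⟩ = 0` for all `(f,e) ∈ D`)
and `dim D = dim F`, then `D` is a Dirac structure, i.e. `D` equals its orthogonal
complement with respect to the symmetrized pairing
`⟨⟨(f₁,e₁),(f₂,e₂)⟩⟩ = ⟨e₂|f₁⟩ + ⟨e₁|f₂⟩`. -/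
theorem dirac_of_power_conserving_and_dim
    {F E : Type*} [AddCommGroup F] [Module ℝ F] [AddCommGroup E] [Module ℝ E]
    [FiniteDimensional ℝ F] [FiniteDimensional ℝ E]
    (pair : E →ₗ[ℝ] F →ₗ[ℝ] ℝ)
    (hnd₁ : ∀ e : E, (∀ f : F, pair e f = 0) → e = 0)
    (hnd₂ : ∀ f : F, (∀ e : E, pair e f = 0) → f = 0)
    (D : Submodule ℝ (F × E))
    (hpow : ∀ x ∈ D, pair x.2 x.1 = 0)
    (hdim : Module.finrank ℝ D = Module.finrank ℝ F) :
    (D : Set (F × E)) =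
      {x : F × E | ∀ y ∈ D, pair y.2 x.1 + pair x.2 y.1 = 0} :=
  dirac_of_power_conserving_and_dim_general pair hnd₁ D hpow hdim.ge
end

section
/- Assume the element setup. Let e_p ∈ E_p, e_q ∈ E_q, u_p ∈ B_p, u* ∈ B_p*, and set f_p := (−1)^{r₁} d_pq e_q + (−1)^{r₁+q} (1/2) T_p(Q(tr_q e_q)) + (−1)^{r₁+q} T_p u* and f_q := d_qp e_p + (−1)^p (1/2) T_q(tr_p e_p) + (−1)^p T_q u_p. Then for every ν_p ∈ E_p and ν_q ∈ E_q: ⟨ν_p | f_p⟩_p = −⟨e_q | d_qp ν_p⟩_q + (−1)^{p+1} (1/2) Q(tr_q e_q)(tr_p ν_p) + (−1)^p u*(tr_p ν_p), and ⟨ν_q | f_q⟩_q = (−1)^p ⟨d_pq ν_q | e_p⟩ₚʳᵉᵛ + (−1)^{p+1} (1/2) Q(tr_q ν_q)(tr_p e_p) + (−1)^p Q(tr_q ν_q)(u_p). -/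
/-!
Pairing `f_p` and `f_q` with test elements moves the two derivatives by the integration-by-parts
identity and the two trace adjoints by their defining property. In both cases the derivative leaves
behind a full boundary term `-(-1) ^ p * Q (trq w) (trp v)`, while the flow supplies half of it with
the opposite sign, so that exactly half survives. The signs match because `p * (n - p) = p * q - p`
and because `p * q + 1 + q + (p - 1) * (q - 1)` and `p` have the same parity.
-/

namespace StokesDirac

variable {K : Type*} [Field K]

lemma neg_one_zpow_eq_of_even_sub {k l : ℤ} (h : Even (k - l)) : (-1 : K) ^ k = (-1) ^ l := by
  rw [← Int.cast_negOnePow, ← Int.cast_negOnePow, (Int.negOnePow_eq_iff k l).2 h]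

lemma neg_one_zpow_mul_self (k : ℤ) : (-1 : K) ^ k * (-1) ^ k = 1 := by
  rw [← mul_zpow, neg_one_mul, neg_neg, one_zpow]

variable {n p q : ℤ} {E_p F_p E_q F_q B_p B_q : Type*}
  [AddCommGroup E_p] [Module K E_p] [AddCommGroup F_p] [Module K F_p]
  [AddCommGroup E_q] [Module K E_q] [AddCommGroup F_q] [Module K F_q]
  [AddCommGroup B_p] [Module K B_p] [AddCommGroup B_q] [Module K B_q]
  {pairP : E_p →ₗ[K] F_p →ₗ[K] K} {pairQ : E_q →ₗ[K] F_q →ₗ[K] K}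
  {dpq : E_q →ₗ[K] F_p} {dqp : E_p →ₗ[K] F_q}
  {trp : E_p →ₗ[K] B_p} {trq : E_q →ₗ[K] B_q} {Q : B_q →ₗ[K] Module.Dual K B_p}
  {T_p : Module.Dual K B_p →ₗ[K] F_p} {T_q : B_p →ₗ[K] F_q}

lemma pairing_dqp
    (hibp : ∀ (w : E_q) (v : E_p),
      (-1 : K) ^ (p * (n - p)) * pairP v (dpq w)
        = (-1 : K) ^ p * pairQ w (dqp v) + Q (trq w) (trp v))
    (w : E_q) (v : E_p) :
    pairQ w (dqp v)
      = (-1 : K) ^ p * ((-1 : K) ^ (p * (n - p)) * pairP v (dpq w))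
        - (-1 : K) ^ p * Q (trq w) (trp v) := by
  rw [hibp, mul_add, add_sub_cancel_right, ← mul_assoc, neg_one_zpow_mul_self, one_mul]

lemma neg_one_zpow_mul_pairing_dpq (hpq : p + q = n + 1)
    (hibp : ∀ (w : E_q) (v : E_p),
      (-1 : K) ^ (p * (n - p)) * pairP v (dpq w)
        = (-1 : K) ^ p * pairQ w (dqp v) + Q (trq w) (trp v))
    (w : E_q) (v : E_p) :
    (-1 : K) ^ (p * q + 1) * pairP v (dpq w)
      = -pairQ w (dqp v) - (-1 : K) ^ p * Q (trq w) (trp v) := by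
  have hsign : (-1 : K) ^ (p * q + 1) = -((-1) ^ p * (-1) ^ (p * (n - p))) := by
    have hexp : p + p * (n - p) = p * q := by
      rw [show n = p + q - 1 by lia]
      ring
    rw [← zpow_add₀ (by simp), hexp, zpow_add_one₀ (by simp), mul_neg_one]
  rw [hsign, pairing_dqp hibp]
  ring

lemma neg_one_zpow_mul_pairing_trace_adjoint
    (hTp : ∀ (v : E_p) (l : Module.Dual K B_p),
      pairP v (T_p l) = (-1 : K) ^ ((p - 1) * (q - 1)) * l (trp v))
    (v : E_p) (l : Module.Dual K B_p) :
    (-1 : K) ^ (p * q + 1 + q) * pairP v (T_p l) = (-1 : K) ^ p * l (trp v) := by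
  have hparity : Even (p * q + 1 + q + (p - 1) * (q - 1) - p) := ⟨p * q + 1 - p, by ring⟩
  rw [hTp, ← mul_assoc, ← zpow_add₀ (by simp), neg_one_zpow_eq_of_even_sub hparity]

lemma pairing_flow_p (hpq : p + q = n + 1)
    (hibp : ∀ (w : E_q) (v : E_p),
      (-1 : K) ^ (p * (n - p)) * pairP v (dpq w)
        = (-1 : K) ^ p * pairQ w (dqp v) + Q (trq w) (trp v))
    (hTp : ∀ (v : E_p) (l : Module.Dual K B_p),
      pairP v (T_p l) = (-1 : K) ^ ((p - 1) * (q - 1)) * l (trp v))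
    (w : E_q) (l : Module.Dual K B_p) (v : E_p) :
    pairP v ((-1 : K) ^ (p * q + 1) • dpq w + (-1 : K) ^ (p * q + 1 + q) • T_p l)
      = -pairQ w (dqp v) + (-1 : K) ^ p * (l - Q (trq w)) (trp v) := by
  rw [map_add, map_smul, map_smul, smul_eq_mul, smul_eq_mul,
    neg_one_zpow_mul_pairing_dpq hpq hibp, neg_one_zpow_mul_pairing_trace_adjoint hTp,
    LinearMap.sub_apply]
  ring

lemma pairing_flow_q
    (hibp : ∀ (w : E_q) (v : E_p),
      (-1 : K) ^ (p * (n - p)) * pairP v (dpq w)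
        = (-1 : K) ^ p * pairQ w (dqp v) + Q (trq w) (trp v))
    (hTq : ∀ (w : E_q) (u : B_p), pairQ w (T_q u) = Q (trq w) u)
    (v : E_p) (u : B_p) (w : E_q) :
    pairQ w (dqp v + (-1 : K) ^ p • T_q u)
      = (-1 : K) ^ p * ((-1 : K) ^ (p * (n - p)) * pairP v (dpq w))
        + (-1 : K) ^ p * Q (trq w) (u - trp v) := by
  rw [map_add, map_smul, smul_eq_mul, pairing_dqp hibp, hTq, map_sub]
  ring

end StokesDirac

theorem stokes_dirac_int_by_parts_general {K : Type*} [Field K] [NeZero (2 : K)]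
    {n p q : ℤ} (hpq : p + q = n + 1)
    {E_p F_p E_q F_q B_p B_q : Type*}
    [AddCommGroup E_p] [Module K E_p] [AddCommGroup F_p] [Module K F_p]
    [AddCommGroup E_q] [Module K E_q] [AddCommGroup F_q] [Module K F_q]
    [AddCommGroup B_p] [Module K B_p] [AddCommGroup B_q] [Module K B_q]
    {pairP : E_p →ₗ[K] F_p →ₗ[K] K} {pairQ : E_q →ₗ[K] F_q →ₗ[K] K}
    {dpq : E_q →ₗ[K] F_p} {dqp : E_p →ₗ[K] F_q}
    {trp : E_p →ₗ[K] B_p} {trq : E_q →ₗ[K] B_q} {Q : B_q →ₗ[K] Module.Dual K B_p}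
    (hibp : ∀ (w : E_q) (v : E_p),
      (-1 : K) ^ (p * (n - p)) * pairP v (dpq w)
        = (-1 : K) ^ p * pairQ w (dqp v) + Q (trq w) (trp v))
    {T_p : Module.Dual K B_p →ₗ[K] F_p}
    (hTp : ∀ (v : E_p) (l : Module.Dual K B_p),
      pairP v (T_p l) = (-1 : K) ^ ((p - 1) * (q - 1)) * l (trp v))
    {T_q : B_p →ₗ[K] F_q}
    (hTq : ∀ (w : E_q) (u : B_p), pairQ w (T_q u) = Q (trq w) u)
    {e_p : E_p} {e_q : E_q} {u_p : B_p} {ustar : Module.Dual K B_p} {f_p : F_p} {f_q : F_q}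
    (hfp : f_p = ((-1 : K) ^ (p * q + 1)) • dpq e_q
        + (((-1 : K) ^ (p * q + 1 + q)) * (1 / 2)) • T_p (Q (trq e_q))
        + ((-1 : K) ^ (p * q + 1 + q)) • T_p ustar)
    (hfq : f_q = dqp e_p + (((-1 : K) ^ p) * (1 / 2)) • T_q (trp e_p)
        + ((-1 : K) ^ p) • T_q u_p) :
    (∀ ν_p : E_p,
      pairP ν_p f_p = -(pairQ e_q (dqp ν_p))
        + (-1 : K) ^ (p + 1) * (1 / 2) * Q (trq e_q) (trp ν_p)
        + (-1 : K) ^ p * ustar (trp ν_p)) ∧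
    (∀ ν_q : E_q,
      pairQ ν_q f_q
        = (-1 : K) ^ p * ((-1 : K) ^ (p * (n - p)) * pairP e_p (dpq ν_q))
        + (-1 : K) ^ (p + 1) * (1 / 2) * Q (trq ν_q) (trp e_p)
        + (-1 : K) ^ p * Q (trq ν_q) u_p) := by
  have hfp' : f_p = (-1 : K) ^ (p * q + 1) • dpq e_q
      + (-1 : K) ^ (p * q + 1 + q) • T_p ((1 / 2 : K) • Q (trq e_q) + ustar) := by
    rw [hfp, map_add, map_smul, smul_add, smul_smul, add_assoc]
  have hfq' : f_q = dqp e_p + (-1 : K) ^ p • T_q ((1 / 2 : K) • trp e_p + u_p) := by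
    rw [hfq, map_add, map_smul, smul_add, smul_smul, add_assoc]
  have hsign : (-1 : K) ^ (p + 1) = -(-1) ^ p := by
    rw [zpow_add_one₀ (by simp), mul_neg_one]
  have hhalf : (1 / 2 : K) + 1 / 2 = 1 := add_halves 1
  refine ⟨fun ν_p => ?_, fun ν_q => ?_⟩
  · rw [hfp', StokesDirac.pairing_flow_p hpq hibp hTp, hsign]
    simp only [LinearMap.sub_apply, LinearMap.add_apply, LinearMap.smul_apply, smul_eq_mul]
    linear_combination (-1 : K) ^ p * Q (trq e_q) (trp ν_p) * hhalf
  · rw [hfq', StokesDirac.pairing_flow_q hibp hTq, hsign]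
    simp only [map_sub, map_add, map_smul, smul_eq_mul]
    linear_combination (-1 : K) ^ p * Q (trq ν_q) (trp e_p) * hhalf

/-- Lemma (integration-by-parts reformulation) for the generalized Stokes-Dirac structure:
given `f_p` and `f_q` defined from `e_p, e_q, u_p, u*` by the Dirac-structure relations,
the stated identities hold for all test elements `ν_p ∈ E_p` and `ν_q ∈ E_q`. -/
theorem stokes_dirac_int_by_parts
    (n p q : ℤ) (hpq : p + q = n + 1)
    {E_p F_p E_q F_q B_p B_q : Type*}
    [AddCommGroup E_p] [Module ℝ E_p] [FiniteDimensional ℝ E_p]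
    [AddCommGroup F_p] [Module ℝ F_p] [FiniteDimensional ℝ F_p]
    [AddCommGroup E_q] [Module ℝ E_q] [FiniteDimensional ℝ E_q]
    [AddCommGroup F_q] [Module ℝ F_q] [FiniteDimensional ℝ F_q]
    [AddCommGroup B_p] [Module ℝ B_p] [FiniteDimensional ℝ B_p]
    [AddCommGroup B_q] [Module ℝ B_q] [FiniteDimensional ℝ B_q]
    (pairP : E_p →ₗ[ℝ] F_p →ₗ[ℝ] ℝ)
    (hP₁ : ∀ e : E_p, (∀ f : F_p, pairP e f = 0) → e = 0)
    (hP₂ : ∀ f : F_p, (∀ e : E_p, pairP e f = 0) → f = 0)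
    (pairQ : E_q →ₗ[ℝ] F_q →ₗ[ℝ] ℝ)
    (hQ₁ : ∀ e : E_q, (∀ f : F_q, pairQ e f = 0) → e = 0)
    (hQ₂ : ∀ f : F_q, (∀ e : E_q, pairQ e f = 0) → f = 0)
    (dpq : E_q →ₗ[ℝ] F_p) (dqp : E_p →ₗ[ℝ] F_q)
    (trp : E_p →ₗ[ℝ] B_p) (trq : E_q →ₗ[ℝ] B_q)
    (Q : B_q →ₗ[ℝ] Module.Dual ℝ B_p)
    (hibp : ∀ (w : E_q) (v : E_p),
      (-1 : ℝ) ^ (p * (n - p)) * pairP v (dpq w)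
        = (-1 : ℝ) ^ p * pairQ w (dqp v) + Q (trq w) (trp v))
    (T_p : Module.Dual ℝ B_p →ₗ[ℝ] F_p)
    (hTp : ∀ (v : E_p) (l : Module.Dual ℝ B_p),
      pairP v (T_p l) = (-1 : ℝ) ^ ((p - 1) * (q - 1)) * l (trp v))
    (T_q : B_p →ₗ[ℝ] F_q)
    (hTq : ∀ (w : E_q) (u : B_p), pairQ w (T_q u) = Q (trq w) u)
    (e_p : E_p) (e_q : E_q) (u_p : B_p) (ustar : Module.Dual ℝ B_p)
    (f_p : F_p) (f_q : F_q)
    (hfp : f_p = ((-1 : ℝ) ^ (p * q + 1)) • dpq e_q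
        + (((-1 : ℝ) ^ (p * q + 1 + q)) * (1 / 2)) • T_p (Q (trq e_q))
        + ((-1 : ℝ) ^ (p * q + 1 + q)) • T_p ustar)
    (hfq : f_q = dqp e_p + (((-1 : ℝ) ^ p) * (1 / 2)) • T_q (trp e_p)
        + ((-1 : ℝ) ^ p) • T_q u_p) :
    (∀ ν_p : E_p,
      pairP ν_p f_p = -(pairQ e_q (dqp ν_p))
        + (-1 : ℝ) ^ (p + 1) * (1 / 2) * Q (trq e_q) (trp ν_p)
        + (-1 : ℝ) ^ p * ustar (trp ν_p)) ∧
    (∀ ν_q : E_q,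
      pairQ ν_q f_q
        = (-1 : ℝ) ^ p * ((-1 : ℝ) ^ (p * (n - p)) * pairP e_p (dpq ν_q))
        + (-1 : ℝ) ^ (p + 1) * (1 / 2) * Q (trq ν_q) (trp e_p)
        + (-1 : ℝ) ^ p * Q (trq ν_q) u_p) := by
  exact stokes_dirac_int_by_parts_general hpq hibp hTp hTq hfp hfq
end

section
/- Assume the element setup with B_p = Z₁ × Z a product of finite-dimensional real vector spaces, and identify B_p* with Z₁* × Z*. Let θ ∈ [0,1]. Suppose (f_p, f_q, (y₁, y_Z), (y*₁, y*_Z), e_p, e_q, (u*₁, u*_Z), (u₁, u_Z)) belongs to the generalized Stokes–Dirac structure D_h, and suppose (u_Z, w_R, u*_Z, w*_R, y*_Z, y*_R, y_Z, y_R) belongs to the interconnection structure D_c on Z (the interface input and output ports of D_h are identified with the left ports of D_c). Then the power balance of the composition D₁ ∘ D_c holds: ⟨e_p|f_p⟩_p + ⟨e_q|f_q⟩_q + y*₁(u₁) + u*₁(y₁) − y*_R(w_R) − w*_R(y_R) = 0. -/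
/-!
Each of the two structures conserves power on its own. For `D_h`, integration by parts turns the
bulk power of the two differentials into minus `(-1) ^ p` times the pairing of the traces; the two
half-trace terms add this back, and what remains is the power at the boundary ports. For `D_c`, the
coefficients of the four pairings of outputs cancel. The two balances share the power of the
interface ports, so subtracting them eliminates it.
-/

section

variable {K : Type*} [Field K]

theorem neg_one_zpow_mul_self (k : ℤ) : (-1 : K) ^ k * (-1) ^ k = 1 := by
  rw [← mul_zpow, neg_one_mul, neg_neg, one_zpow]

theorem neg_one_zpow_mul_zpow_sub {n p q : ℤ} (hpq : p + q = n + 1) :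
    (-1 : K) ^ p * (-1) ^ (p * (n - p)) = (-1) ^ (p * q) := by
  obtain rfl : n = p + q - 1 := by lia
  rw [← zpow_add₀ (neg_ne_zero.mpr one_ne_zero)]
  congr 1
  ring

theorem neg_one_zpow_mul_zpow_pred_mul_pred (p q : ℤ) :
    (-1 : K) ^ (p * q + 1 + q) * (-1) ^ ((p - 1) * (q - 1)) = (-1) ^ p := by
  have hne : (-1 : K) ≠ 0 := neg_ne_zero.mpr one_ne_zero
  have hexp : p * q + 1 + q + (p - 1) * (q - 1)
      = p + ((p * q - p + 1) + (p * q - p + 1)) := by ring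
  rw [← zpow_add₀ hne, hexp, zpow_add₀ hne, zpow_add₀ hne, neg_one_zpow_mul_self, mul_one]

variable {E_p F_p E_q F_q B B' : Type*}
  [AddCommGroup E_p] [Module K E_p] [AddCommGroup F_p] [Module K F_p]
  [AddCommGroup E_q] [Module K E_q] [AddCommGroup F_q] [Module K F_q]
  [AddCommGroup B] [Module K B] [AddCommGroup B'] [Module K B']

variable (E_p F_p E_q F_q) in
/-- The data of an element on which the generalized Stokes–Dirac structure is built: pairings,
discrete differentials and traces subject to integration by parts. The boundary space `B` and its
dual are modelled by a bilinear pairing `β` of `B'` with `B`. The field `trq` is the paper's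
`Q ∘ tr_q`; `T_p` and `T_q` are the transposes of `trp` (up to sign) and `trq`. -/
structure StokesDiracElement (n p q : ℤ) (β : B' →ₗ[K] B →ₗ[K] K) where
  add_eq : p + q = n + 1
  pairP : E_p →ₗ[K] F_p →ₗ[K] K
  pairQ : E_q →ₗ[K] F_q →ₗ[K] K
  dpq : E_q →ₗ[K] F_p
  dqp : E_p →ₗ[K] F_q
  trp : E_p →ₗ[K] B
  trq : E_q →ₗ[K] B'
  integration_by_parts (w : E_q) (v : E_p) :
    (-1 : K) ^ (p * (n - p)) * pairP v (dpq w)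
      = (-1) ^ p * pairQ w (dqp v) + β (trq w) (trp v)
  T_p : B' →ₗ[K] F_p
  pairP_T_p (v : E_p) (l : B') :
    pairP v (T_p l) = (-1) ^ ((p - 1) * (q - 1)) * β l (trp v)
  T_q : B →ₗ[K] F_q
  pairQ_T_q (w : E_q) (u : B) : pairQ w (T_q u) = β (trq w) u

namespace StokesDiracElement

variable {n p q : ℤ} {β : B' →ₗ[K] B →ₗ[K] K}
  (S : StokesDiracElement E_p F_p E_q F_q n p q β)

/-- Membership of a tuple of ports in the generalized Stokes–Dirac structure `D_h`. -/
structure DiracRel (f_p : F_p) (f_q : F_q) (y : B) (ystar : B')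
    (e_p : E_p) (e_q : E_q) (ustar : B') (u : B) : Prop where
  flow_p : f_p = ((-1 : K) ^ (p * q + 1)) • S.dpq e_q
    + ((-1 : K) ^ (p * q + 1 + q) * (1 / 2)) • S.T_p (S.trq e_q)
    + ((-1 : K) ^ (p * q + 1 + q)) • S.T_p ustar
  flow_q : f_q = S.dqp e_p + ((-1 : K) ^ p * (1 / 2)) • S.T_q (S.trp e_p)
    + ((-1 : K) ^ p) • S.T_q u
  output_star : ystar = -(((-1 : K) ^ p) • S.trq e_q)
  output : y = -(((-1 : K) ^ p) • S.trp e_p)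

theorem pairP_dpq_add_pairQ_dqp (v : E_p) (w : E_q) :
    (-1) ^ (p * q + 1) * S.pairP v (S.dpq w) + S.pairQ w (S.dqp v)
      = -((-1) ^ p * β (S.trq w) (S.trp v)) := by
  have hsign : (-1 : K) ^ (p * q + 1) = -((-1) ^ p * (-1) ^ (p * (n - p))) := by
    rw [neg_one_zpow_mul_zpow_sub S.add_eq, zpow_add_one₀ (neg_ne_zero.mpr one_ne_zero),
      mul_neg_one]
  rw [hsign]
  linear_combination -(-1 : K) ^ p * S.integration_by_parts w v
    - S.pairQ w (S.dqp v) * neg_one_zpow_mul_self (K := K) p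

theorem zpow_mul_pairP_T_p (v : E_p) (l : B') :
    (-1) ^ (p * q + 1 + q) * S.pairP v (S.T_p l) = (-1) ^ p * β l (S.trp v) := by
  rw [S.pairP_T_p, ← mul_assoc, neg_one_zpow_mul_zpow_pred_mul_pred]

variable {S} {f_p : F_p} {f_q : F_q} {y : B} {ystar : B'}
  {e_p : E_p} {e_q : E_q} {ustar : B'} {u : B}

theorem DiracRel.pairP_flow (h : S.DiracRel f_p f_q y ystar e_p e_q ustar u) :
    S.pairP e_p f_p = (-1) ^ (p * q + 1) * S.pairP e_p (S.dpq e_q)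
      + (-1) ^ p * (1 / 2 * β (S.trq e_q) (S.trp e_p)) - β ustar y := by
  rw [h.flow_p, h.output]
  simp only [map_add, map_smul, map_neg, smul_eq_mul]
  linear_combination 1 / 2 * S.zpow_mul_pairP_T_p e_p (S.trq e_q) + S.zpow_mul_pairP_T_p e_p ustar

theorem DiracRel.pairQ_flow (h : S.DiracRel f_p f_q y ystar e_p e_q ustar u) :
    S.pairQ e_q f_q = S.pairQ e_q (S.dqp e_p)
      + (-1) ^ p * (1 / 2 * β (S.trq e_q) (S.trp e_p)) - β ystar u := by
  rw [h.flow_q, h.output_star]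
  simp only [map_add, map_smul, map_neg, LinearMap.neg_apply, LinearMap.smul_apply, smul_eq_mul,
    S.pairQ_T_q]
  ring

theorem DiracRel.power_balance [NeZero (2 : K)]
    (h : S.DiracRel f_p f_q y ystar e_p e_q ustar u) :
    S.pairP e_p f_p + S.pairQ e_q f_q + β ystar u + β ustar y = 0 := by
  rw [h.pairP_flow, h.pairQ_flow]
  linear_combination S.pairP_dpq_add_pairQ_dqp e_p e_q
    + (-1) ^ p * β (S.trq e_q) (S.trp e_p) * add_halves (1 : K)

end StokesDiracElement

/-- Membership of a tuple of ports in the interconnection structure `D_c` with parameter `θ`, on a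
space `Z` whose dual is modelled by `Z'`. -/
structure InterconnectionRel {Z Z' : Type*} [AddCommGroup Z] [Module K Z]
    [AddCommGroup Z'] [Module K Z'] (θ : K)
    (wL wR : Z) (wstarL wstarR ystarL ystarR : Z') (yL yR : Z) : Prop where
  left : wL = (θ - 1 / 2) • yL - θ • yR
  left_star : wstarL = (1 / 2 - θ) • ystarL + (θ - 1) • ystarR
  right : wR = (1 - θ) • yL + (θ - 1 / 2) • yR
  right_star : wstarR = θ • ystarL + (1 / 2 - θ) • ystarR

variable {Z₁ Z Z₁' Z' : Type*} [AddCommGroup Z₁] [Module K Z₁] [AddCommGroup Z] [Module K Z]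
  [AddCommGroup Z₁'] [Module K Z₁'] [AddCommGroup Z'] [Module K Z']

theorem InterconnectionRel.power_balance {θ : K} {wL wR yL yR : Z}
    {wstarL wstarR ystarL ystarR : Z'} (β : Z' →ₗ[K] Z →ₗ[K] K)
    (h : InterconnectionRel θ wL wR wstarL wstarR ystarL ystarR yL yR) :
    β ystarL wL + β wstarL yL + β ystarR wR + β wstarR yR = 0 := by
  rw [h.left, h.left_star, h.right, h.right_star]
  simp only [map_add, map_sub, map_smul, LinearMap.add_apply, LinearMap.smul_apply, smul_eq_mul]
  ring

/-- The pairing of a product with a product that sums the pairings of the factors; it realizes the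
identification of `(Z₁ × Z)*` with `Z₁* × Z*`. -/
def prodPairing (β₁ : Z₁' →ₗ[K] Z₁ →ₗ[K] K) (β : Z' →ₗ[K] Z →ₗ[K] K) :
    Z₁' × Z' →ₗ[K] Z₁ × Z →ₗ[K] K :=
  β₁.compl₁₂ (.fst K Z₁' Z') (.fst K Z₁ Z) + β.compl₁₂ (.snd K Z₁' Z') (.snd K Z₁ Z)

theorem prodPairing_apply (β₁ : Z₁' →ₗ[K] Z₁ →ₗ[K] K) (β : Z' →ₗ[K] Z →ₗ[K] K)
    (l : Z₁' × Z') (z : Z₁ × Z) : prodPairing β₁ β l z = β₁ l.1 z.1 + β l.2 z.2 :=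
  rfl

theorem composition_with_interconnection_power_balance_general [NeZero (2 : K)] {n p q : ℤ}
    (β₁ : Z₁' →ₗ[K] Z₁ →ₗ[K] K) (β : Z' →ₗ[K] Z →ₗ[K] K)
    (S : StokesDiracElement E_p F_p E_q F_q n p q (prodPairing β₁ β)) {θ : K}
    {f_p : F_p} {f_q : F_q} {e_p : E_p} {e_q : E_q} {y₁ u₁ : Z₁} {ystar₁ ustar₁ : Z₁'}
    {yZ uZ wR yR : Z} {ystarZ ustarZ wstarR ystarR : Z'}
    (h : S.DiracRel f_p f_q (y₁, yZ) (ystar₁, ystarZ) e_p e_q (ustar₁, ustarZ) (u₁, uZ))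
    (hc : InterconnectionRel θ uZ wR ustarZ wstarR ystarZ ystarR yZ yR) :
    S.pairP e_p f_p + S.pairQ e_q f_q + β₁ ystar₁ u₁ + β₁ ustar₁ y₁
      - β ystarR wR - β wstarR yR = 0 := by
  have h_element := h.power_balance
  simp only [prodPairing_apply] at h_element
  linear_combination h_element - hc.power_balance β

end

/-- Power balance of the composition `D₁ ∘ D_c`: for an element whose boundary space is
`B_p = Z₁ × Z` (with dual identified with `Z₁* × Z*`), if a tuple belongs to the
generalized Stokes-Dirac structure `D_h` and its interface ports are coupled, via the
interconnection structure `D_c` on `Z`, to the right-hand ports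
`(w_R, w*_R, y*_R, y_R)`, then
`⟨e_p|f_p⟩_p + ⟨e_q|f_q⟩_q + y*₁(u₁) + u*₁(y₁) − y*_R(w_R) − w*_R(y_R) = 0`. -/
theorem composition_with_interconnection_power_balance
    (n p q : ℤ) (hpq : p + q = n + 1)
    {E_p F_p E_q F_q B_q Z₁ Z : Type*}
    [AddCommGroup E_p] [Module ℝ E_p] [FiniteDimensional ℝ E_p]
    [AddCommGroup F_p] [Module ℝ F_p] [FiniteDimensional ℝ F_p]
    [AddCommGroup E_q] [Module ℝ E_q] [FiniteDimensional ℝ E_q]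
    [AddCommGroup F_q] [Module ℝ F_q] [FiniteDimensional ℝ F_q]
    [AddCommGroup B_q] [Module ℝ B_q] [FiniteDimensional ℝ B_q]
    [AddCommGroup Z₁] [Module ℝ Z₁] [FiniteDimensional ℝ Z₁]
    [AddCommGroup Z] [Module ℝ Z] [FiniteDimensional ℝ Z]
    (pairP : E_p →ₗ[ℝ] F_p →ₗ[ℝ] ℝ)
    (hP₁ : ∀ e : E_p, (∀ f : F_p, pairP e f = 0) → e = 0)
    (hP₂ : ∀ f : F_p, (∀ e : E_p, pairP e f = 0) → f = 0)
    (pairQ : E_q →ₗ[ℝ] F_q →ₗ[ℝ] ℝ)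
    (hQ₁ : ∀ e : E_q, (∀ f : F_q, pairQ e f = 0) → e = 0)
    (hQ₂ : ∀ f : F_q, (∀ e : E_q, pairQ e f = 0) → f = 0)
    (dpq : E_q →ₗ[ℝ] F_p) (dqp : E_p →ₗ[ℝ] F_q)
    (trp : E_p →ₗ[ℝ] Z₁ × Z) (trq : E_q →ₗ[ℝ] B_q)
    (Q : B_q →ₗ[ℝ] Module.Dual ℝ Z₁ × Module.Dual ℝ Z)
    (hibp : ∀ (w : E_q) (v : E_p),
      (-1 : ℝ) ^ (p * (n - p)) * pairP v (dpq w)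
        = (-1 : ℝ) ^ p * pairQ w (dqp v)
          + ((Q (trq w)).1 (trp v).1 + (Q (trq w)).2 (trp v).2))
    (T_p : Module.Dual ℝ Z₁ × Module.Dual ℝ Z →ₗ[ℝ] F_p)
    (hTp : ∀ (v : E_p) (l : Module.Dual ℝ Z₁ × Module.Dual ℝ Z),
      pairP v (T_p l)
        = (-1 : ℝ) ^ ((p - 1) * (q - 1)) * (l.1 (trp v).1 + l.2 (trp v).2))
    (T_q : Z₁ × Z →ₗ[ℝ] F_q)
    (hTq : ∀ (w : E_q) (u : Z₁ × Z),
      pairQ w (T_q u) = (Q (trq w)).1 u.1 + (Q (trq w)).2 u.2)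
    (θ : ℝ) (hθ : θ ∈ Set.Icc (0 : ℝ) 1)
    (f_p : F_p) (f_q : F_q) (e_p : E_p) (e_q : E_q)
    (y₁ : Z₁) (y_Z : Z) (ystar₁ : Module.Dual ℝ Z₁) (ystarZ : Module.Dual ℝ Z)
    (u₁ : Z₁) (u_Z : Z) (ustar₁ : Module.Dual ℝ Z₁) (ustarZ : Module.Dual ℝ Z)
    (wR : Z) (wstarR : Module.Dual ℝ Z) (ystarR : Module.Dual ℝ Z) (yR : Z)
    -- the tuple belongs to the generalized Stokes-Dirac structure `D_h`:
    (hfp : f_p = ((-1 : ℝ) ^ (p * q + 1)) • dpq e_q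
        + (((-1 : ℝ) ^ (p * q + 1 + q)) * (1 / 2)) • T_p (Q (trq e_q))
        + ((-1 : ℝ) ^ (p * q + 1 + q)) • T_p (ustar₁, ustarZ))
    (hfq : f_q = dqp e_p + (((-1 : ℝ) ^ p) * (1 / 2)) • T_q (trp e_p)
        + ((-1 : ℝ) ^ p) • T_q (u₁, u_Z))
    (hystar : (ystar₁, ystarZ) = -(((-1 : ℝ) ^ p) • Q (trq e_q)))
    (hy : (y₁, y_Z) = -(((-1 : ℝ) ^ p) • trp e_p))
    -- the interface ports of `D_h` are identified with the left ports of `D_c`: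
    (hc₁ : u_Z = (θ - 1 / 2) • y_Z - θ • yR)
    (hc₂ : ustarZ = (1 / 2 - θ) • ystarZ + (θ - 1) • ystarR)
    (hc₃ : wR = (1 - θ) • y_Z + (θ - 1 / 2) • yR)
    (hc₄ : wstarR = θ • ystarZ + (1 / 2 - θ) • ystarR) :
    pairP e_p f_p + pairQ e_q f_q + ystar₁ u₁ + ustar₁ y₁
      - ystarR wR - wstarR yR = 0 :=
  composition_with_interconnection_power_balance_general
    (.id : Module.Dual ℝ Z₁ →ₗ[ℝ] _) (.id : Module.Dual ℝ Z →ₗ[ℝ] _)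
    ⟨hpq, pairP, pairQ, dpq, dqp, trp, Q ∘ₗ trq, hibp, T_p, hTp, T_q, hTq⟩
    ⟨hfp, hfq, hystar, hy⟩ ⟨hc₁, hc₂, hc₃, hc₄⟩
end

section
/- Assume the element setup and let D_h be the generalized Stokes–Dirac structure. Let ⋆_p : E_p → F_p and ⋆_q : E_q → F_q be linear maps such that the bilinear forms (e, ẽ) ↦ ⟨e | ⋆_p ẽ⟩_p on E_p and (e, ẽ) ↦ ⟨e | ⋆_q ẽ⟩_q on E_q are symmetric. Let β_p : ℝ → E_p and β_q : ℝ → E_q be differentiable functions, and let y_p, u_p : ℝ → B_p and y*, u* : ℝ → B_p* be functions such that for every t the tuple (−⋆_p β̇_p(t), −⋆_q β̇_q(t), y_p(t), y*(t), β_p(t), β_q(t), u*(t), u_p(t)) belongs to D_h, where β̇ denotes the time derivative. Then the discrete energy E_K(t) := ⟨β_p(t) | ⋆_p β_p(t)⟩_p + ⟨β_q(t) | ⋆_q β_q(t)⟩_q is differentiable and satisfies dE_K/dt (t) = 2 ( y*(t)(u_p(t)) + u*(t)(y_p(t)) ) for every t. -/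
/-- The generalized Stokes-Dirac structure on a single element: the set of tuples
`((f_p, f_q, y_p, y*), (e_p, e_q, u*, u_p))` satisfying the defining relations. -/
def diracSet (p q : ℤ) {E_p F_p E_q F_q B_p B_q : Type*}
    [AddCommGroup E_p] [Module ℝ E_p] [AddCommGroup F_p] [Module ℝ F_p]
    [AddCommGroup E_q] [Module ℝ E_q] [AddCommGroup F_q] [Module ℝ F_q]
    [AddCommGroup B_p] [Module ℝ B_p] [AddCommGroup B_q] [Module ℝ B_q]
    (dpq : E_q →ₗ[ℝ] F_p) (dqp : E_p →ₗ[ℝ] F_q)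
    (trp : E_p →ₗ[ℝ] B_p) (trq : E_q →ₗ[ℝ] B_q)
    (Q : B_q →ₗ[ℝ] Module.Dual ℝ B_p)
    (T_p : Module.Dual ℝ B_p →ₗ[ℝ] F_p) (T_q : B_p →ₗ[ℝ] F_q) :
    Set ((F_p × F_q × B_p × Module.Dual ℝ B_p) ×
         (E_p × E_q × Module.Dual ℝ B_p × B_p)) :=
  {x | x.1.1 = ((-1 : ℝ) ^ (p * q + 1)) • dpq x.2.2.1
        + (((-1 : ℝ) ^ (p * q + 1 + q)) * (1 / 2)) • T_p (Q (trq x.2.2.1))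
        + ((-1 : ℝ) ^ (p * q + 1 + q)) • T_p x.2.2.2.1
    ∧ x.1.2.1 = dqp x.2.1 + (((-1 : ℝ) ^ p) * (1 / 2)) • T_q (trp x.2.1)
        + ((-1 : ℝ) ^ p) • T_q x.2.2.2.2
    ∧ x.1.2.2.2 = -(((-1 : ℝ) ^ p) • Q (trq x.2.2.1))
    ∧ x.1.2.2.1 = -(((-1 : ℝ) ^ p) • trp x.2.1)}

/-!
By symmetry of the discrete Hodge stars, `dE_K/dt = 2 (⟨β_p|⋆_p β̇_p⟩_p + ⟨β_q|⋆_q β̇_q⟩_q)`, which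
is `-2` times the power `⟨e_p|f_p⟩_p + ⟨e_q|f_q⟩_q` of an element of the Stokes-Dirac structure. In
that power, integration by parts cancels the two interior terms up to the boundary term
`-(-1)^p Q(tr_q e_q)(tr_p e_p)`; each of the two flows compensates half of it, so that only the
products of the boundary inputs with the boundary outputs survive.
-/

theorem neg_one_zpow_mul_of_even_sub {K : Type*} [DivisionRing K] {a b c : ℤ}
    (h : Even (a + b - c)) : (-1 : K) ^ a * (-1) ^ b = (-1) ^ c := by
  have hne : (-1 : K) ≠ 0 := neg_ne_zero.mpr one_ne_zero
  rw [← zpow_add₀ hne, ← sub_add_cancel (a + b) c, zpow_add₀ hne, h.neg_one_zpow, one_mul]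

theorem hasDerivAt_bilin_self_of_symm {𝕜 E G : Type*} [NontriviallyNormedField 𝕜]
    [NormedAddCommGroup E] [NormedSpace 𝕜 E] [NormedAddCommGroup G] [NormedSpace 𝕜 G]
    (B : E →L[𝕜] E →L[𝕜] G) (hB : ∀ x y, B x y = B y x)
    {γ : 𝕜 → E} {γ' : E} {t : 𝕜} (hγ : HasDerivAt γ γ' t) :
    HasDerivAt (fun s => B (γ s) (γ s)) ((2 : 𝕜) • B (γ t) γ') t :=
  (B.hasDerivAt_of_bilinear (fun _ => hγ) (fun _ => hγ)).congr_deriv <| by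
    rw [hB γ', two_smul]

section PowerBalance

variable {n p q : ℤ} {E_p F_p E_q F_q B_p B_q : Type*}
  [AddCommGroup E_p] [Module ℝ E_p] [AddCommGroup F_p] [Module ℝ F_p]
  [AddCommGroup E_q] [Module ℝ E_q] [AddCommGroup F_q] [Module ℝ F_q]
  [AddCommGroup B_p] [Module ℝ B_p] [AddCommGroup B_q] [Module ℝ B_q]
  {pairP : E_p →ₗ[ℝ] F_p →ₗ[ℝ] ℝ} {pairQ : E_q →ₗ[ℝ] F_q →ₗ[ℝ] ℝ}
  {dpq : E_q →ₗ[ℝ] F_p} {dqp : E_p →ₗ[ℝ] F_q}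
  {trp : E_p →ₗ[ℝ] B_p} {trq : E_q →ₗ[ℝ] B_q} {Q : B_q →ₗ[ℝ] Module.Dual ℝ B_p}
  {T_p : Module.Dual ℝ B_p →ₗ[ℝ] F_p} {T_q : B_p →ₗ[ℝ] F_q}
  {f_p : F_p} {f_q : F_q} {y_p u_p : B_p} {ystar ustar : Module.Dual ℝ B_p}
  {e_p : E_p} {e_q : E_q}

theorem neg_one_zpow_mul_pairing_dpq (hpq : p + q = n + 1)
    {w : E_q} {v : E_p}
    (hibp : (-1 : ℝ) ^ (p * (n - p)) * pairP v (dpq w)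
      = (-1 : ℝ) ^ p * pairQ w (dqp v) + Q (trq w) (trp v)) :
    (-1 : ℝ) ^ (p * q + 1) * pairP v (dpq w)
      = -pairQ w (dqp v) - (-1 : ℝ) ^ p * Q (trq w) (trp v) := by
  obtain rfl : n = p + q - 1 := eq_sub_of_add_eq hpq.symm
  have hsign : (-1 : ℝ) ^ p * (-1) ^ (p * (p + q - 1 - p)) = (-1) ^ (p * q) :=
    neg_one_zpow_mul_of_even_sub ⟨0, by ring⟩
  have hsq : (-1 : ℝ) ^ p * (-1) ^ p = 1 :=
    neg_one_zpow_mul_of_even_sub (c := 0) ⟨p, by ring⟩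
  calc (-1 : ℝ) ^ (p * q + 1) * pairP v (dpq w)
      = -((-1) ^ p * ((-1) ^ (p * (p + q - 1 - p)) * pairP v (dpq w))) := by
        rw [zpow_add_one₀ (by norm_num), ← hsign]; ring
    _ = -((-1) ^ p * ((-1) ^ p * pairQ w (dqp v) + Q (trq w) (trp v))) := by rw [hibp]
    _ = -pairQ w (dqp v) - (-1) ^ p * Q (trq w) (trp v) := by
        linear_combination -pairQ w (dqp v) * hsq

theorem neg_one_zpow_mul_pairing_trace_adjoint {v : E_p} {l : Module.Dual ℝ B_p}
    (hTp : pairP v (T_p l) = (-1 : ℝ) ^ ((p - 1) * (q - 1)) * l (trp v)) :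
    (-1 : ℝ) ^ (p * q + 1 + q) * pairP v (T_p l) = (-1 : ℝ) ^ p * l (trp v) := by
  have hsign : (-1 : ℝ) ^ (p * q + 1 + q) * (-1) ^ ((p - 1) * (q - 1)) = (-1) ^ p :=
    neg_one_zpow_mul_of_even_sub ⟨p * q + 1 - p, by ring⟩
  rw [hTp, ← mul_assoc, hsign]

theorem pairing_p_of_mem_diracSet (hpq : p + q = n + 1)
    (hibp : ∀ (w : E_q) (v : E_p),
      (-1 : ℝ) ^ (p * (n - p)) * pairP v (dpq w)
        = (-1 : ℝ) ^ p * pairQ w (dqp v) + Q (trq w) (trp v))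
    (hTp : ∀ (v : E_p) (l : Module.Dual ℝ B_p),
      pairP v (T_p l) = (-1 : ℝ) ^ ((p - 1) * (q - 1)) * l (trp v))
    (h : ((f_p, f_q, y_p, ystar), (e_p, e_q, ustar, u_p)) ∈
      diracSet p q dpq dqp trp trq Q T_p T_q) :
    pairP e_p f_p
      = -pairQ e_q (dqp e_p) - (-1 : ℝ) ^ p / 2 * Q (trq e_q) (trp e_p) - ustar y_p := by
  obtain ⟨hf, -, -, hy⟩ := h
  dsimp only at hf hy
  have hd := neg_one_zpow_mul_pairing_dpq hpq (hibp e_q e_p)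
  have hT (l : Module.Dual ℝ B_p) := neg_one_zpow_mul_pairing_trace_adjoint (hTp e_p l)
  rw [hf, hy]
  simp only [map_add, map_neg, map_smul, smul_eq_mul]
  linear_combination hd + 1 / 2 * hT (Q (trq e_q)) + hT ustar

theorem pairing_q_of_mem_diracSet
    (hTq : ∀ (w : E_q) (u : B_p), pairQ w (T_q u) = Q (trq w) u)
    (h : ((f_p, f_q, y_p, ystar), (e_p, e_q, ustar, u_p)) ∈
      diracSet p q dpq dqp trp trq Q T_p T_q) :
    pairQ e_q f_q
      = pairQ e_q (dqp e_p) + (-1 : ℝ) ^ p / 2 * Q (trq e_q) (trp e_p) - ystar u_p := by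
  obtain ⟨-, hf, hy, -⟩ := h
  dsimp only at hf hy
  rw [hf, hy]
  simp only [map_add, map_smul, smul_eq_mul, hTq, LinearMap.neg_apply, LinearMap.smul_apply]
  ring

theorem power_balance_of_mem_diracSet (hpq : p + q = n + 1)
    (hibp : ∀ (w : E_q) (v : E_p),
      (-1 : ℝ) ^ (p * (n - p)) * pairP v (dpq w)
        = (-1 : ℝ) ^ p * pairQ w (dqp v) + Q (trq w) (trp v))
    (hTp : ∀ (v : E_p) (l : Module.Dual ℝ B_p),
      pairP v (T_p l) = (-1 : ℝ) ^ ((p - 1) * (q - 1)) * l (trp v))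
    (hTq : ∀ (w : E_q) (u : B_p), pairQ w (T_q u) = Q (trq w) u)
    (h : ((f_p, f_q, y_p, ystar), (e_p, e_q, ustar, u_p)) ∈
      diracSet p q dpq dqp trp trq Q T_p T_q) :
    pairP e_p f_p + pairQ e_q f_q + ystar u_p + ustar y_p = 0 := by
  rw [pairing_p_of_mem_diracSet hpq hibp hTp h, pairing_q_of_mem_diracSet hTq h]
  ring

end PowerBalance

theorem element_energy_conservation_general
    {n p q : ℤ} (hpq : p + q = n + 1)
    {E_p F_p E_q F_q B_p B_q : Type*}
    [NormedAddCommGroup E_p] [NormedSpace ℝ E_p] [AddCommGroup F_p] [Module ℝ F_p]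
    [NormedAddCommGroup E_q] [NormedSpace ℝ E_q] [AddCommGroup F_q] [Module ℝ F_q]
    [AddCommGroup B_p] [Module ℝ B_p] [AddCommGroup B_q] [Module ℝ B_q]
    {pairP : E_p →ₗ[ℝ] F_p →ₗ[ℝ] ℝ} {pairQ : E_q →ₗ[ℝ] F_q →ₗ[ℝ] ℝ}
    {dpq : E_q →ₗ[ℝ] F_p} {dqp : E_p →ₗ[ℝ] F_q}
    {trp : E_p →ₗ[ℝ] B_p} {trq : E_q →ₗ[ℝ] B_q} {Q : B_q →ₗ[ℝ] Module.Dual ℝ B_p}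
    (hibp : ∀ (w : E_q) (v : E_p),
      (-1 : ℝ) ^ (p * (n - p)) * pairP v (dpq w)
        = (-1 : ℝ) ^ p * pairQ w (dqp v) + Q (trq w) (trp v))
    {T_p : Module.Dual ℝ B_p →ₗ[ℝ] F_p}
    (hTp : ∀ (v : E_p) (l : Module.Dual ℝ B_p),
      pairP v (T_p l) = (-1 : ℝ) ^ ((p - 1) * (q - 1)) * l (trp v))
    {T_q : B_p →ₗ[ℝ] F_q}
    (hTq : ∀ (w : E_q) (u : B_p), pairQ w (T_q u) = Q (trq w) u)
    {starP : E_p →ₗ[ℝ] F_p} {starQ : E_q →ₗ[ℝ] F_q}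
    (massP : E_p →L[ℝ] E_p →L[ℝ] ℝ) (hmassP : ∀ e e', massP e e' = pairP e (starP e'))
    (massQ : E_q →L[ℝ] E_q →L[ℝ] ℝ) (hmassQ : ∀ e e', massQ e e' = pairQ e (starQ e'))
    (hsymP : ∀ e e' : E_p, massP e e' = massP e' e)
    (hsymQ : ∀ e e' : E_q, massQ e e' = massQ e' e)
    {βp : ℝ → E_p} {βq : ℝ → E_q} {βp' : E_p} {βq' : E_q} {t : ℝ}
    (hβp : HasDerivAt βp βp' t) (hβq : HasDerivAt βq βq' t)
    {y_p u_p : B_p} {ystar ustar : Module.Dual ℝ B_p}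
    (hmem : ((-(starP βp'), -(starQ βq'), y_p, ystar), (βp t, βq t, ustar, u_p)) ∈
      diracSet p q dpq dqp trp trq Q T_p T_q) :
    HasDerivAt
      (fun s => pairP (βp s) (starP (βp s)) + pairQ (βq s) (starQ (βq s)))
      (2 * (ystar u_p + ustar y_p)) t := by
  have hp := hasDerivAt_bilin_self_of_symm massP hsymP hβp
  have hq := hasDerivAt_bilin_self_of_symm massQ hsymQ hβq
  have hbal := power_balance_of_mem_diracSet hpq hibp hTp hTq hmem
  simp only [hmassP, hmassQ, smul_eq_mul] at hp hq
  simp only [map_neg] at hbal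
  exact (hp.add hq).congr_deriv (by linear_combination -2 * hbal)

/-- Energy conservation on an element: if `(−⋆_p β̇_p, −⋆_q β̇_q, y_p, y*, β_p, β_q,
u*, u_p)` belongs to the generalized Stokes-Dirac structure for every time `t`, and the
bilinear forms induced by the discrete Hodge stars are symmetric, then the discrete
energy `E_K(t) = ⟨β_p|⋆_p β_p⟩_p + ⟨β_q|⋆_q β_q⟩_q` is differentiable with
`dE_K/dt = 2 (y*(u_p) + u*(y_p))`. -/
theorem element_energy_conservation
    (n p q : ℤ) (hpq : p + q = n + 1)
    {E_p F_p E_q F_q B_p B_q : Type*}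
    [NormedAddCommGroup E_p] [NormedSpace ℝ E_p] [FiniteDimensional ℝ E_p]
    [AddCommGroup F_p] [Module ℝ F_p] [FiniteDimensional ℝ F_p]
    [NormedAddCommGroup E_q] [NormedSpace ℝ E_q] [FiniteDimensional ℝ E_q]
    [AddCommGroup F_q] [Module ℝ F_q] [FiniteDimensional ℝ F_q]
    [AddCommGroup B_p] [Module ℝ B_p] [FiniteDimensional ℝ B_p]
    [AddCommGroup B_q] [Module ℝ B_q] [FiniteDimensional ℝ B_q]
    (pairP : E_p →ₗ[ℝ] F_p →ₗ[ℝ] ℝ)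
    (hP₁ : ∀ e : E_p, (∀ f : F_p, pairP e f = 0) → e = 0)
    (hP₂ : ∀ f : F_p, (∀ e : E_p, pairP e f = 0) → f = 0)
    (pairQ : E_q →ₗ[ℝ] F_q →ₗ[ℝ] ℝ)
    (hQ₁ : ∀ e : E_q, (∀ f : F_q, pairQ e f = 0) → e = 0)
    (hQ₂ : ∀ f : F_q, (∀ e : E_q, pairQ e f = 0) → f = 0)
    (dpq : E_q →ₗ[ℝ] F_p) (dqp : E_p →ₗ[ℝ] F_q)
    (trp : E_p →ₗ[ℝ] B_p) (trq : E_q →ₗ[ℝ] B_q)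
    (Q : B_q →ₗ[ℝ] Module.Dual ℝ B_p)
    (hibp : ∀ (w : E_q) (v : E_p),
      (-1 : ℝ) ^ (p * (n - p)) * pairP v (dpq w)
        = (-1 : ℝ) ^ p * pairQ w (dqp v) + Q (trq w) (trp v))
    (T_p : Module.Dual ℝ B_p →ₗ[ℝ] F_p)
    (hTp : ∀ (v : E_p) (l : Module.Dual ℝ B_p),
      pairP v (T_p l) = (-1 : ℝ) ^ ((p - 1) * (q - 1)) * l (trp v))
    (T_q : B_p →ₗ[ℝ] F_q)
    (hTq : ∀ (w : E_q) (u : B_p), pairQ w (T_q u) = Q (trq w) u)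
    (starP : E_p →ₗ[ℝ] F_p) (starQ : E_q →ₗ[ℝ] F_q)
    (hsymP : ∀ e e' : E_p, pairP e (starP e') = pairP e' (starP e))
    (hsymQ : ∀ e e' : E_q, pairQ e (starQ e') = pairQ e' (starQ e))
    (βp : ℝ → E_p) (βq : ℝ → E_q)
    (hβp : Differentiable ℝ βp) (hβq : Differentiable ℝ βq)
    (y_p u_p : ℝ → B_p) (ystar ustar : ℝ → Module.Dual ℝ B_p)
    (hmem : ∀ t : ℝ,
      ((-(starP (deriv βp t)), -(starQ (deriv βq t)), y_p t, ystar t),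
        (βp t, βq t, ustar t, u_p t)) ∈ diracSet p q dpq dqp trp trq Q T_p T_q) :
    ∀ t : ℝ,
      HasDerivAt
        (fun s => pairP (βp s) (starP (βp s)) + pairQ (βq s) (starQ (βq s)))
        (2 * (ystar t (u_p t) + ustar t (y_p t))) t := by
  exact fun t => element_energy_conservation_general hpq hibp hTp hTq
    (pairP.compl₂ starP).toContinuousBilinearMap (fun _ _ => rfl)
    (pairQ.compl₂ starQ).toContinuousBilinearMap (fun _ _ => rfl)
    hsymP hsymQ (hβp t).hasDerivAt (hβq t).hasDerivAt (hmem t)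
end
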